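/- arXiv:1901.08624 — 7 statements merged into one kernel-verified Lean document; each statement's English description precedes it below -/
import Mathlib

section
/- Let N be a positive integer and let M = (m_ij) be an N×N real matrix. Then M is a permutation matrix if and only if M satisfies the doubly stochastic constraints (m_ij ≥ 0 for all i,j; every row sum equals 1; every column sum equals 1) and P(M) = 0. -/
open Finset

/-- The matrix ℓ1−ℓ2 penalty
P(M) = ∑_i [∑_j |m_ij| − (∑_j m_ij²)^{1/2}] + ∑_j [∑_i |m_ij| − (∑_i m_ij²)^{1/2}]. -/
noncomputable def pen {N : ℕ} (M : Matrix (Fin N) (Fin N) ℝ) : ℝ :=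
  (∑ i, ((∑ j, |M i j|) - Real.sqrt (∑ j, (M i j) ^ 2))) +
  (∑ j, ((∑ i, |M i j|) - Real.sqrt (∑ i, (M i j) ^ 2)))

/-- A permutation matrix: a square 0-1 matrix with exactly one 1 in each row and
each column and zeros elsewhere. -/
def IsPermMatrix {N : ℕ} (M : Matrix (Fin N) (Fin N) ℝ) : Prop :=
  ∃ σ : Equiv.Perm (Fin N), ∀ i j, M i j = if σ i = j then 1 else 0

/-- Doubly stochastic: nonnegative entries, all row sums and column sums equal 1. -/
def IsDoublyStochastic {N : ℕ} (M : Matrix (Fin N) (Fin N) ℝ) : Prop :=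
  (∀ i j, 0 ≤ M i j) ∧ (∀ i, ∑ j, M i j = 1) ∧ (∀ j, ∑ i, M i j = 1)

theorem aux_le {N : ℕ} (v : Fin N → ℝ) (h0 : ∀ j, 0 ≤ v j) (h1 : ∑ j, v j = 1) (j : Fin N) :
    v j ≤ 1 := by
  rw [← h1]
  exact Finset.single_le_sum (fun i _ => h0 i) (Finset.mem_univ j)

theorem aux_sq {N : ℕ} (v : Fin N → ℝ) (h0 : ∀ j, 0 ≤ v j) (h1 : ∑ j, v j = 1) :
    0 ≤ (∑ j, |v j|) - Real.sqrt (∑ j, (v j) ^ 2) := by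
  have e : ∑ j, |v j| = 1 := by
    rw [← h1]; exact Finset.sum_congr rfl (fun j _ => abs_of_nonneg (h0 j))
  rw [e, sub_nonneg]
  apply Real.sqrt_le_one.mpr
  rw [← h1]
  exact Finset.sum_le_sum (fun j _ => by nlinarith [h0 j, aux_le v h0 h1 j])

theorem aux_zero_one {N : ℕ} (v : Fin N → ℝ) (h0 : ∀ j, 0 ≤ v j) (h1 : ∑ j, v j = 1)
    (h : (∑ j, |v j|) - Real.sqrt (∑ j, (v j) ^ 2) = 0) (j : Fin N) : v j = 0 ∨ v j = 1 := by
  have e : ∑ j, |v j| = 1 := by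
    rw [← h1]; exact Finset.sum_congr rfl (fun j _ => abs_of_nonneg (h0 j))
  rw [e, sub_eq_zero, eq_comm, Real.sqrt_eq_one] at h
  have hs : ∑ j, (v j - v j ^ 2) = 0 := by
    rw [Finset.sum_sub_distrib, h, h1, sub_self]
  have := (Finset.sum_eq_zero_iff_of_nonneg
    (fun j _ => by nlinarith [h0 j, aux_le v h0 h1 j])).mp hs j (Finset.mem_univ j)
  have h3 : v j * (v j - 1) = 0 := by linarith
  rcases mul_eq_zero.mp h3 with h4 | h4
  · exact Or.inl h4
  · exact Or.inr (by linarith)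

theorem aux_unique {N : ℕ} (v : Fin N → ℝ) (h0 : ∀ j, 0 ≤ v j) (h1 : ∑ j, v j = 1)
    (a b : Fin N) (ha : v a = 1) (hab : a ≠ b) : v b = 0 := by
  have h := Finset.sum_le_sum_of_subset_of_nonneg (Finset.subset_univ {a, b})
    (fun i _ _ => h0 i)
  rw [Finset.sum_pair hab, h1, ha] at h
  linarith [h0 b]

/-- M is a permutation matrix iff M is doubly stochastic and P(M) = 0. -/
theorem stmt0 {N : ℕ} (hN : 0 < N) (M : Matrix (Fin N) (Fin N) ℝ) :
    IsPermMatrix M ↔ IsDoublyStochastic M ∧ pen M = 0 := by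
  constructor
  · rintro ⟨σ, h⟩
    have hc : ∀ i j, M i j = if i = σ.symm j then 1 else 0 := by
      intro i j
      rw [h]
      simp only [Equiv.eq_symm_apply]
    have hr1 : ∀ i, ∑ j, M i j = 1 := fun i => by simp [h]
    have hc1 : ∀ j, ∑ i, M i j = 1 := fun j => by simp [hc]
    have hsq : ∀ i j, M i j ^ 2 = M i j := fun i j => by rw [h]; split_ifs <;> simp
    have habs : ∀ i j, |M i j| = M i j := fun i j => by rw [h]; split_ifs <;> simp
    refine ⟨⟨fun i j => by rw [h]; split_ifs <;> simp, hr1, hc1⟩, ?_⟩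
    simp [pen, hsq, habs, hr1, hc1]
  · rintro ⟨⟨h0, hr, hc⟩, hp⟩
    have hR : ∀ i ∈ Finset.univ, 0 ≤ (∑ j, |M i j|) - Real.sqrt (∑ j, (M i j) ^ 2) :=
      fun i _ => aux_sq (fun j => M i j) (h0 i) (hr i)
    have hC : ∀ j ∈ Finset.univ, 0 ≤ (∑ i, |M i j|) - Real.sqrt (∑ i, (M i j) ^ 2) :=
      fun j _ => aux_sq (fun i => M i j) (fun i => h0 i j) (hc j)
    have hR' := Finset.sum_nonneg hR
    have hC' := Finset.sum_nonneg hC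
    unfold pen at hp
    have hz := (Finset.sum_eq_zero_iff_of_nonneg hR).mp (by linarith)
    have h01 : ∀ i j, M i j = 0 ∨ M i j = 1 := fun i j =>
      aux_zero_one (fun j => M i j) (h0 i) (hr i) (hz i (Finset.mem_univ i)) j
    have hex : ∀ i, ∃ j, M i j = 1 := by
      intro i
      by_contra hn
      push Not at hn
      have : ∑ j, M i j = 0 :=
        Finset.sum_eq_zero (fun j _ => (h01 i j).resolve_right (hn j))
      rw [hr i] at this
      exact one_ne_zero this
    choose f hf using hex
    have hinj : Function.Injective f := by
      intro a b hab
      by_contra hne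
      have := aux_unique (fun i => M i (f a)) (fun i => h0 i _) (hc _) a b (hf a) hne
      simp only [hab, hf b] at this
      exact one_ne_zero this
    refine ⟨Equiv.ofBijective f (Finite.injective_iff_bijective.mp hinj), fun i j => ?_⟩
    rw [Equiv.ofBijective_apply]
    split_ifs with hij
    · rw [← hij, hf]
    · exact aux_unique (fun j => M i j) (h0 i) (hr i) (f i) j (hf i) hij
end

section
/- Fix a positive integer N. There exists a constant C > 0 depending only on N such that: for every ε with 0 < ε ≤ 1/(8N²) and every N×N real matrix M = (m_ij) with nonnegative entries satisfying P(M) ≤ ε, |Σ_j m_ij − 1| ≤ ε for every row i, and |Σ_i m_ij − 1| ≤ ε for every column j, there exists a permutation matrix P* with ‖M − P*‖_F ≤ C ε, where ‖·‖_F is the Frobenius norm. -/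
open Finset

/-- Frobenius norm of a matrix. -/
noncomputable def frobNorm {N : ℕ} (M : Matrix (Fin N) (Fin N) ℝ) : ℝ :=
  Real.sqrt (∑ i, ∑ j, (M i j) ^ 2)

theorem row_aux {N : ℕ} (hN : 0 < N) (v : Fin N → ℝ) (hv : ∀ j, 0 ≤ v j) :
    ∃ k, (∑ j, v j) - v k ≤ 2 * ((∑ j, |v j|) - Real.sqrt (∑ j, (v j) ^ 2)) := by
  have : Nonempty (Fin N) := ⟨⟨0, hN⟩⟩
  obtain ⟨k, hk⟩ := Finite.exists_max v
  refine ⟨k, ?_⟩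
  have h1 : ∑ j, |v j| = ∑ j, v j := Finset.sum_congr rfl fun j _ => abs_of_nonneg (hv j)
  have h2 : ∑ j, (v j) ^ 2 ≤ v k * ∑ j, v j := by
    rw [Finset.mul_sum]
    refine Finset.sum_le_sum fun j _ => ?_
    rw [sq]
    exact mul_le_mul_of_nonneg_right (hk j) (hv j)
  have hs : 0 ≤ ∑ j, v j := Finset.sum_nonneg fun j _ => hv j
  have h3 : Real.sqrt (∑ j, (v j) ^ 2) ≤ (v k + ∑ j, v j) / 2 := by
    refine Real.sqrt_le_iff.mpr ⟨by linarith [hv k], ?_⟩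
    nlinarith [sq_nonneg (v k - ∑ j, v j)]
  rw [h1]
  linarith

theorem pen_aux {N : ℕ} (v : Fin N → ℝ) :
    0 ≤ (∑ j, |v j|) - Real.sqrt (∑ j, (v j) ^ 2) := by
  have hs : 0 ≤ ∑ j, |v j| := Finset.sum_nonneg fun j _ => abs_nonneg _
  refine sub_nonneg.mpr (Real.sqrt_le_iff.mpr ⟨hs, ?_⟩)
  rw [sq (∑ j, |v j|), Finset.sum_mul]
  refine Finset.sum_le_sum fun j _ => ?_
  rw [← sq_abs, sq]
  exact mul_le_mul_of_nonneg_left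
    (Finset.single_le_sum (f := fun j => |v j|) (fun j _ => abs_nonneg _) (Finset.mem_univ j))
    (abs_nonneg _)

/-- there is C > 0 depending only on N such that any entrywise nonnegative
matrix with P(M) ≤ ε and row/column sums within ε of 1 (0 < ε ≤ 1/(8N²)) is within
Frobenius distance Cε of some permutation matrix. -/
theorem stmt2 {N : ℕ} (hN : 0 < N) :
    ∃ C > (0 : ℝ), ∀ ε : ℝ, 0 < ε → ε ≤ 1 / (8 * (N : ℝ) ^ 2) →
      ∀ M : Matrix (Fin N) (Fin N) ℝ,
        (∀ i j, 0 ≤ M i j) →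
        pen M ≤ ε →
        (∀ i, |(∑ j, M i j) - 1| ≤ ε) →
        (∀ j, |(∑ i, M i j) - 1| ≤ ε) →
        ∃ Pstar : Matrix (Fin N) (Fin N) ℝ,
          IsPermMatrix Pstar ∧ frobNorm (M - Pstar) ≤ C * ε := by
  have hN1 : (1 : ℝ) ≤ N := by exact_mod_cast hN
  refine ⟨3 * N, by positivity, ?_⟩
  intro ε hε hε' M hM hpen hrow hcol
  have hε8 : ε ≤ 1 / 8 := by
    refine hε'.trans ?_
    apply one_div_le_one_div_of_le (by norm_num)
    nlinarith
  have hrp : ∀ i, (∑ j, |M i j|) - Real.sqrt (∑ j, (M i j) ^ 2) ≤ ε := by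
    intro i
    have h1 := Finset.single_le_sum
      (f := fun i => (∑ j, |M i j|) - Real.sqrt (∑ j, (M i j) ^ 2))
      (fun i _ => pen_aux (fun j => M i j)) (Finset.mem_univ i)
    have h2 : 0 ≤ ∑ j, ((∑ i, |M i j|) - Real.sqrt (∑ i, (M i j) ^ 2)) :=
      Finset.sum_nonneg fun j _ => pen_aux (fun i => M i j)
    unfold pen at hpen
    beta_reduce at h1
    linarith
  choose f hf using fun i => row_aux hN (fun j => M i j) (fun j => hM i j)
  beta_reduce at hf
  have hfl : ∀ i, 1 - 3 * ε ≤ M i (f i) := by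
    intro i
    have := (abs_le.mp (hrow i)).1
    linarith [hf i, hrp i]
  have hfu : ∀ i, M i (f i) ≤ 1 + ε := by
    intro i
    have h1 := (abs_le.mp (hrow i)).2
    have h2 := Finset.single_le_sum (f := fun j => M i j) (fun j _ => hM i j)
      (Finset.mem_univ (f i))
    beta_reduce at h2
    linarith
  have hoff : ∀ i j, f i ≠ j → M i j ≤ 2 * ε := by
    intro i j hj
    have h2 := Finset.sum_le_sum_of_subset_of_nonneg (f := fun j => M i j)
      (Finset.subset_univ {f i, j}) (fun j _ _ => hM i j)
    rw [Finset.sum_pair hj] at h2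
    linarith [hf i, hrp i]
  have hinj : Function.Injective f := by
    intro a b hab
    by_contra hne
    have h2 := Finset.sum_le_sum_of_subset_of_nonneg (f := fun i => M i (f a))
      (Finset.subset_univ {a, b}) (fun i _ _ => hM i (f a))
    rw [Finset.sum_pair hne] at h2
    have h3 := hfl a
    have h4 := hfl b
    rw [← hab] at h4
    have h5 := (abs_le.mp (hcol (f a))).2
    linarith
  let σ : Equiv.Perm (Fin N) := Equiv.ofBijective f (Finite.injective_iff_bijective.mp hinj)
  refine ⟨Matrix.of fun i j => if σ i = j then 1 else 0, ⟨σ, fun i j => rfl⟩, ?_⟩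
  unfold frobNorm
  refine Real.sqrt_le_iff.mpr ⟨by positivity, ?_⟩
  have key : ∀ i j, ((M - Matrix.of fun i j => if σ i = j then (1 : ℝ) else 0) i j) ^ 2 ≤ (3 * ε) ^ 2 := by
    intro i j
    rw [Matrix.sub_apply, Matrix.of_apply]
    apply sq_le_sq'
    · by_cases h : f i = j
      · have : σ i = j := h
        subst h
        simp only [this, if_true]
        linarith [hfl i]
      · have : ¬ σ i = j := h
        simp only [this, if_false]
        linarith [hM i j]
    · by_cases h : f i = j
      · have : σ i = j := h
        subst h
        simp only [this, if_true]
        linarith [hfu i]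
      · have : ¬ σ i = j := h
        simp only [this, if_false]
        linarith [hoff i j h]
  refine (Finset.sum_le_sum fun i _ => Finset.sum_le_sum fun j _ => key i j).trans ?_
  simp only [Finset.sum_const, Finset.card_univ, Fintype.card_fin, nsmul_eq_mul]
  apply le_of_eq
  ring
end

section
/- Let N ≥ 1 and let v = (v_1, …, v_N) be a vector in ℝ^N with nonnegative entries. Suppose 0 < ε ≤ 1/2, Σ_{k=1}^N v_k − (Σ_{k=1}^N v_k²)^{1/2} ≤ ε, and |Σ_{k=1}^N v_k − 1| ≤ ε. Then there exists an index j* such that v_j ≤ 3Nε for all j ≠ j* and |v_{j*} − 1| ≤ 4N²ε; that is, v is within O(ε) of a unit coordinate vector. -/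
open Finset

/-- a nonnegative vector with ∑ v_k − ‖v‖₂ ≤ ε and |∑ v_k − 1| ≤ ε
(0 < ε ≤ 1/2) is within O(ε) of a unit coordinate vector: there is j* with
v_j ≤ 3Nε for all j ≠ j* and |v_{j*} − 1| ≤ 4N²ε. -/
theorem stmt4 {N : ℕ} (hN : 1 ≤ N) (v : Fin N → ℝ) (hv : ∀ k, 0 ≤ v k)
    (ε : ℝ) (hε0 : 0 < ε) (hε : ε ≤ 1 / 2)
    (h1 : (∑ k, v k) - Real.sqrt (∑ k, (v k) ^ 2) ≤ ε)
    (h2 : |(∑ k, v k) - 1| ≤ ε) :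
    ∃ jstar : Fin N, (∀ j, j ≠ jstar → v j ≤ 3 * N * ε) ∧
      |v jstar - 1| ≤ 4 * (N : ℝ) ^ 2 * ε := by
  haveI : Nonempty (Fin N) := ⟨⟨0, hN⟩⟩
  obtain ⟨m, hm⟩ := Finite.exists_max v
  have hQ : ∑ k, (v k) ^ 2 ≤ v m * ∑ k, v k := by
    rw [Finset.mul_sum]
    refine Finset.sum_le_sum fun k _ => ?_
    rw [pow_two]
    exact mul_le_mul_of_nonneg_right (hm k) (hv k)
  have hpair : ∀ j, j ≠ m → v j + v m ≤ ∑ k, v k := by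
    intro j hj
    rw [← Finset.sum_pair hj]
    exact Finset.sum_le_sum_of_subset_of_nonneg (Finset.subset_univ _) fun k _ _ => hv k
  have hmS : v m ≤ ∑ k, v k :=
    Finset.single_le_sum (fun k _ => hv k) (Finset.mem_univ m)
  have hQ0 : 0 ≤ ∑ k, (v k) ^ 2 := Finset.sum_nonneg fun k _ => sq_nonneg _
  have hsq := Real.sq_sqrt hQ0
  obtain ⟨h3, h4⟩ := abs_le.mp h2
  generalize (∑ k, v k) = S at *
  generalize Real.sqrt (∑ k, (v k) ^ 2) = r at *
  have h5 : (S - ε) ^ 2 ≤ r ^ 2 := pow_le_pow_left₀ (by linarith) (by linarith) 2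
  have hS : 0 < S := by linarith
  have h6 : S - 2 * ε ≤ v m := by
    refine le_of_mul_le_mul_right ?_ hS
    nlinarith [sq_nonneg ε]
  have hN' : (1 : ℝ) ≤ N := by exact_mod_cast hN
  have h7 : ε ≤ N * ε := le_mul_of_one_le_left hε0.le hN'
  have h8 : ε ≤ (N : ℝ) ^ 2 * ε := le_mul_of_one_le_left hε0.le (one_le_pow₀ hN')
  refine ⟨m, fun j hj => ?_, abs_le.mpr ⟨?_, ?_⟩⟩
  · have := hpair j hj
    linarith
  · linarith
  · linarith
end

section
/- For λ ∈ [1,2], the function F(q) := 6q² − 8q + 2 − 4λ·√(q² + (1−q)²) attains its minimum over the interval [0,1] at q = 1; that is, F(1) ≤ F(q) for all q ∈ [0,1]. -/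
/-- for λ ∈ [1,2], F(q) = 6q² − 8q + 2 − 4λ√(q² + (1−q)²) attains its
minimum over [0,1] at q = 1. -/
theorem stmt11 (lam : ℝ) (hlam : lam ∈ Set.Icc (1 : ℝ) 2) :
    ∀ q ∈ Set.Icc (0 : ℝ) 1,
      6 * (1 : ℝ) ^ 2 - 8 * 1 + 2 - 4 * lam * Real.sqrt ((1 : ℝ) ^ 2 + (1 - 1) ^ 2) ≤
        6 * q ^ 2 - 8 * q + 2 - 4 * lam * Real.sqrt (q ^ 2 + (1 - q) ^ 2) := by
  intro q hq
  obtain ⟨h1, _⟩ := hlam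
  obtain ⟨h0, hq1⟩ := hq
  have e : Real.sqrt ((1 : ℝ) ^ 2 + (1 - 1) ^ 2) = 1 := by norm_num
  rw [e]
  have hs2 : Real.sqrt (q ^ 2 + (1 - q) ^ 2) ^ 2 = q ^ 2 + (1 - q) ^ 2 :=
    Real.sq_sqrt (by positivity)
  have hs1 : Real.sqrt (q ^ 2 + (1 - q) ^ 2) ≤ 1 := by
    rw [Real.sqrt_le_one]
    nlinarith [mul_nonneg h0 (sub_nonneg.2 hq1)]
  generalize Real.sqrt (q ^ 2 + (1 - q) ^ 2) = s at *
  nlinarith [mul_nonneg (sub_nonneg.2 h1) (sub_nonneg.2 hs1), sq_nonneg (s - 1), sq_nonneg (q - 1)]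
end

section
/- For 0 ≤ λ < √2, the function F(q) := 4[q² + (1−q)²] − 4λ·√(q² + (1−q)²) attains its unique minimum over [0,1] at q = 1/2; that is, F(1/2) < F(q) for all q ∈ [0,1] with q ≠ 1/2. -/
/-- for 0 ≤ λ < √2, F(q) = 4[q² + (1−q)²] − 4λ√(q² + (1−q)²) attains
its unique minimum over [0,1] at q = 1/2. -/
theorem stmt15 (lam : ℝ) (hlam0 : 0 ≤ lam) (hlam : lam < Real.sqrt 2) :
    ∀ q ∈ Set.Icc (0 : ℝ) 1, q ≠ 1 / 2 →
      4 * ((1 / 2 : ℝ) ^ 2 + (1 - 1 / 2) ^ 2) -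
          4 * lam * Real.sqrt ((1 / 2 : ℝ) ^ 2 + (1 - 1 / 2) ^ 2) <
        4 * (q ^ 2 + (1 - q) ^ 2) - 4 * lam * Real.sqrt (q ^ 2 + (1 - q) ^ 2) := by
  intro q _ hq
  have hs : (1 / 2 : ℝ) ^ 2 + (1 - 1 / 2) ^ 2 < q ^ 2 + (1 - q) ^ 2 := by
    have h : 0 < (q - 1 / 2) ^ 2 := by
      have : q - 1 / 2 ≠ 0 := sub_ne_zero.mpr hq
      positivity
    nlinarith
  have hab := Real.sqrt_lt_sqrt (by norm_num) hs
  have ha := Real.sq_sqrt (show (0 : ℝ) ≤ (1 / 2 : ℝ) ^ 2 + (1 - 1 / 2) ^ 2 by norm_num)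
  have hb := Real.sq_sqrt (show (0 : ℝ) ≤ q ^ 2 + (1 - q) ^ 2 by positivity)
  have ha0 := Real.sqrt_nonneg ((1 / 2 : ℝ) ^ 2 + (1 - 1 / 2) ^ 2)
  have h2 : Real.sqrt 2 ≤ 2 * Real.sqrt ((1 / 2 : ℝ) ^ 2 + (1 - 1 / 2) ^ 2) := by
    apply Real.sqrt_le_iff.mpr
    constructor
    · positivity
    · rw [mul_pow, ha]; norm_num
  generalize Real.sqrt ((1 / 2 : ℝ) ^ 2 + (1 - 1 / 2) ^ 2) = a at *
  generalize Real.sqrt (q ^ 2 + (1 - q) ^ 2) = b at *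
  rw [← ha, ← hb]
  have := mul_pos (sub_pos.mpr hab) (show 0 < a + b - lam by linarith)
  nlinarith
end

section
/- Let q, r, s, t be nonnegative real numbers with qt ≥ rs, q + r > 0, s + t > 0, q ≥ r, and t ≥ s. Define I(q,r,s,t) := ∫_{[−1,1]²} max(q·x₁ + r·x₂, 0)·max(s·x₁ + t·x₂, 0) dx₁ dx₂. Then I(q,r,s,t) = (1/3)(qs + rt) + (1/4)(qt + rs) + (1/24)(r²/q² + s²/t²)(3qt − rs). (Note that the hypotheses force q > 0 and t > 0, so the formula is well defined.) -/
open MeasureTheory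

/-- The integrand. -/
noncomputable def reluF (q r s t x y : ℝ) : ℝ :=
  (max (q * x + r * y) 0) * (max (s * x + t * y) 0)

lemma reluF_cont (q r s t : ℝ) : Continuous (Function.uncurry (reluF q r s t)) := by
  unfold reluF Function.uncurry
  fun_prop

lemma reluF_cont_left (q r s t x : ℝ) : Continuous (fun y => reluF q r s t x y) := by
  unfold reluF
  fun_prop

lemma reluF_ii (q r s t c d : ℝ) (a b : ℝ) :
    IntervalIntegrable (fun x => ∫ y in c..d, reluF q r s t x y) volume a b :=
  (intervalIntegral.continuous_parametric_intervalIntegral_of_continuous'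
    (reluF_cont q r s t) c d).intervalIntegrable _ _

lemma poly_int (A B C a b : ℝ) : ∫ y in a..b, (A + B * y + C * y ^ 2) =
    A * (b - a) + B * (b ^ 2 - a ^ 2) / 2 + C * (b ^ 3 - a ^ 3) / 3 := by
  have hd : ∀ y ∈ Set.uIcc a b, HasDerivAt (fun y : ℝ => A * y + B * y ^ 2 / 2 + C * y ^ 3 / 3)
      (A + B * y + C * y ^ 2) y := by
    intro y _
    have h := (((hasDerivAt_id y).const_mul A).add
      (((hasDerivAt_pow 2 y).const_mul B).div_const 2)).add
      (((hasDerivAt_pow 3 y).const_mul C).div_const 3)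
    refine h.congr_deriv ?_
    norm_num
    ring
  rw [intervalIntegral.integral_eq_sub_of_hasDerivAt hd
    ((by fun_prop : Continuous fun y : ℝ => A + B * y + C * y ^ 2).intervalIntegrable _ _)]
  ring

lemma quad_one (q r s t : ℝ) (hq : 0 ≤ q) (hr : 0 ≤ r) (hs : 0 ≤ s) (ht : 0 ≤ t) :
    ∫ x in (0:ℝ)..1, ∫ y in (0:ℝ)..1, reluF q r s t x y =
      (1 / 3) * (q * s + r * t) + (1 / 4) * (q * t + r * s) := by
  have h : ∀ x ∈ Set.uIcc (0:ℝ) 1, ∫ y in (0:ℝ)..1, reluF q r s t x y =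
      r * t / 3 + ((q * t + r * s) / 2) * x + (q * s) * x ^ 2 := by
    intro x hx
    rw [Set.uIcc_of_le zero_le_one] at hx
    have h' : ∀ y ∈ Set.uIcc (0:ℝ) 1, reluF q r s t x y =
        q * s * x ^ 2 + ((q * t + r * s) * x) * y + (r * t) * y ^ 2 := by
      intro y hy
      rw [Set.uIcc_of_le zero_le_one] at hy
      have := hx.1
      have := hy.1
      unfold reluF
      rw [max_eq_left (by positivity), max_eq_left (by positivity)]
      ring
    rw [intervalIntegral.integral_congr h', poly_int]
    ring
  rw [intervalIntegral.integral_congr h, poly_int]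
  ring

lemma quad_zero (q r s t : ℝ) (hq : 0 ≤ q) (hr : 0 ≤ r) :
    ∫ x in (-1:ℝ)..0, ∫ y in (-1:ℝ)..0, reluF q r s t x y = 0 := by
  have h : ∀ x ∈ Set.uIcc (-1:ℝ) 0, ∫ y in (-1:ℝ)..0, reluF q r s t x y = 0 := by
    intro x hx
    rw [Set.uIcc_of_le (by norm_num)] at hx
    have h' : ∀ y ∈ Set.uIcc (-1:ℝ) 0, reluF q r s t x y = 0 := by
      intro y hy
      rw [Set.uIcc_of_le (by norm_num)] at hy
      unfold reluF
      rw [max_eq_right, zero_mul]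
      nlinarith [hx.2, hy.2, mul_nonneg hq (neg_nonneg.2 hx.2), mul_nonneg hr (neg_nonneg.2 hy.2)]
    rw [intervalIntegral.integral_congr h']
    simp
  rw [intervalIntegral.integral_congr h]
  simp

lemma quad_four (q r s t : ℝ) (hr : 0 ≤ r) (hs : 0 ≤ s) (ht : 0 < t)
    (hdet : r * s ≤ q * t) (h2 : s ≤ t) :
    ∫ x in (0:ℝ)..1, ∫ y in (-1:ℝ)..0, reluF q r s t x y =
      (1 / 24) * (s ^ 2 / t ^ 2) * (3 * (q * t) - r * s) := by
  have h : ∀ x ∈ Set.uIcc (0:ℝ) 1, ∫ y in (-1:ℝ)..0, reluF q r s t x y =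
      (s ^ 2 / (6 * t ^ 2) * (3 * (q * t) - r * s)) * x ^ 3 := by
    intro x hx
    rw [Set.uIcc_of_le zero_le_one] at hx
    obtain ⟨hx0, hx1⟩ := hx
    obtain ⟨a, ha⟩ : ∃ a, a = -(s * x / t) := ⟨_, rfl⟩
    have hat : t * a = -(s * x) := by rw [ha]; field_simp
    have ha0 : a ≤ 0 := by
      rw [ha, neg_nonpos]; positivity
    have ha1 : -1 ≤ a := by
      rw [ha, neg_le_neg_iff, div_le_one ht]; nlinarith
    have hu : 0 ≤ q * x + r * a := by
      have : 0 ≤ t * (q * x + r * a) := by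
        have e : t * (q * x + r * a) = (q * t - r * s) * x := by linear_combination r * hat
        rw [e]
        exact mul_nonneg (by linarith) hx0
      exact nonneg_of_mul_nonneg_right this ht
    have hA : ∀ y ∈ Set.uIcc (-1:ℝ) a, reluF q r s t x y = 0 := by
      intro y hy
      rw [Set.uIcc_of_le ha1] at hy
      unfold reluF
      rw [max_eq_right (a := s * x + t * y), mul_zero]
      nlinarith [mul_le_mul_of_nonneg_left hy.2 ht.le]
    have hB : ∀ y ∈ Set.uIcc a 0, reluF q r s t x y =
        q * s * x ^ 2 + ((q * t + r * s) * x) * y + (r * t) * y ^ 2 := by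
      intro y hy
      rw [Set.uIcc_of_le ha0] at hy
      unfold reluF
      rw [max_eq_left, max_eq_left]
      · ring
      · nlinarith [mul_le_mul_of_nonneg_left hy.1 ht.le]
      · nlinarith [mul_le_mul_of_nonneg_left hy.1 hr]
    rw [← intervalIntegral.integral_add_adjacent_intervals
      ((reluF_cont_left q r s t x).intervalIntegrable (-1) a)
      ((reluF_cont_left q r s t x).intervalIntegrable a 0),
      intervalIntegral.integral_congr hA, intervalIntegral.integral_congr hB, poly_int, ha]
    simp only [intervalIntegral.integral_zero]
    field_simp
    ring
  rw [intervalIntegral.integral_congr h, intervalIntegral.integral_const_mul, integral_pow]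
  field_simp
  norm_num
  ring

lemma reluF_swap (q r s t x y : ℝ) : reluF q r s t x y = reluF t s r q y x := by
  unfold reluF
  rw [mul_comm, add_comm (s * x), add_comm (q * x)]

lemma quad_two (q r s t : ℝ) (hr : 0 ≤ r) (hs : 0 ≤ s) (hq : 0 < q)
    (hdet : r * s ≤ q * t) (h1 : r ≤ q) :
    ∫ x in (-1:ℝ)..0, ∫ y in (0:ℝ)..1, reluF q r s t x y =
      (1 / 24) * (r ^ 2 / q ^ 2) * (3 * (q * t) - r * s) := by
  have hi : IntegrableOn (Function.uncurry (reluF q r s t))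
      (Set.uIoc (-1) 0 ×ˢ Set.uIoc 0 1) := by
    exact ((reluF_cont q r s t).continuousOn.integrableOn_compact
      (isCompact_uIcc.prod isCompact_uIcc)).mono_set
      (Set.prod_mono Set.uIoc_subset_uIcc Set.uIoc_subset_uIcc)
  rw [intervalIntegral_intervalIntegral_swap hi]
  simp_rw [reluF_swap q r s t]
  rw [quad_four t s r q hs hr hq (by linarith) h1]
  ring

/-- for q,r,s,t ≥ 0 with qt ≥ rs, q + r > 0, s + t > 0, q ≥ r, t ≥ s,
∫_{[−1,1]²} max(q x₁ + r x₂, 0) max(s x₁ + t x₂, 0) dx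
  = (1/3)(qs + rt) + (1/4)(qt + rs) + (1/24)(r²/q² + s²/t²)(3qt − rs). -/
theorem stmt17 (q r s t : ℝ) (hq : 0 ≤ q) (hr : 0 ≤ r) (hs : 0 ≤ s) (ht : 0 ≤ t)
    (hdet : r * s ≤ q * t) (hqr : 0 < q + r) (hst : 0 < s + t)
    (h1 : r ≤ q) (h2 : s ≤ t) :
    ∫ p in (Set.Icc (-1 : ℝ) 1) ×ˢ (Set.Icc (-1 : ℝ) 1),
        (max (q * p.1 + r * p.2) 0) * (max (s * p.1 + t * p.2) 0) =
      (1 / 3) * (q * s + r * t) + (1 / 4) * (q * t + r * s) +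
        (1 / 24) * (r ^ 2 / q ^ 2 + s ^ 2 / t ^ 2) * (3 * (q * t) - r * s) := by
  have hq' : 0 < q := by linarith
  have ht' : 0 < t := by linarith
  have hF : ∫ p in (Set.Icc (-1 : ℝ) 1) ×ˢ (Set.Icc (-1 : ℝ) 1),
        (max (q * p.1 + r * p.2) 0) * (max (s * p.1 + t * p.2) 0) =
      ∫ x in (-1:ℝ)..1, ∫ y in (-1:ℝ)..1, reluF q r s t x y := by
    have hi : IntegrableOn (Function.uncurry (reluF q r s t))
        ((Set.Icc (-1 : ℝ) 1) ×ˢ (Set.Icc (-1 : ℝ) 1)) (volume.prod volume) :=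
      (reluF_cont q r s t).continuousOn.integrableOn_compact (isCompact_Icc.prod isCompact_Icc)
    have := setIntegral_prod _ hi
    simp only [intervalIntegral.integral_of_le (show (-1:ℝ) ≤ 1 by norm_num),
      ← integral_Icc_eq_integral_Ioc]
    exact this
  have hsplit : ∀ x, ∫ y in (-1:ℝ)..1, reluF q r s t x y =
      (∫ y in (-1:ℝ)..0, reluF q r s t x y) + ∫ y in (0:ℝ)..1, reluF q r s t x y := fun x =>
    (intervalIntegral.integral_add_adjacent_intervals
      ((reluF_cont_left q r s t x).intervalIntegrable (-1) 0)
      ((reluF_cont_left q r s t x).intervalIntegrable 0 1)).symm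
  rw [hF]
  simp_rw [hsplit]
  rw [intervalIntegral.integral_add (reluF_ii ..) (reluF_ii ..),
    ← intervalIntegral.integral_add_adjacent_intervals
      (reluF_ii q r s t (-1) 0 (-1) 0) (reluF_ii q r s t (-1) 0 0 1),
    ← intervalIntegral.integral_add_adjacent_intervals
      (reluF_ii q r s t 0 1 (-1) 0) (reluF_ii q r s t 0 1 0 1),
    quad_zero q r s t hq hr, quad_one q r s t hq hr hs ht,
    quad_four q r s t hr hs ht' hdet h2, quad_two q r s t hr hs hq' hdet h1]
  ring
end

section
/- Let q, r, s, t be nonnegative real numbers with qt ≥ rs, q + r > 0, s + t > 0, and q < r. Define I(q,r,s,t) := ∫_{[−1,1]²} max(q·x₁ + r·x₂, 0)·max(s·x₁ + t·x₂, 0) dx₁ dx₂. Then I(q,r,s,t) = (2/3)(qs + rt) + q²(qt − 3rs)/(24r²) + s²(3qt − rs)/(24t²). (Note that the hypotheses force r > 0 and t > 0, so the formula is well defined.) -/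
open MeasureTheory

/-- The one-dimensional inner integral. -/
lemma inner_aux (A B : ℝ) (hBA : B ≤ A) (hB1 : -1 ≤ B) (hB2 : B ≤ 1) :
    ∫ y in (-1 : ℝ)..1, max (A + y) 0 * max (B + y) 0 =
      A * B + (A + B) / 2 + 1 / 3 + A * B ^ 2 / 2 - B ^ 3 / 6 := by
  have hc : Continuous fun y : ℝ => max (A + y) 0 * max (B + y) 0 := by fun_prop
  rw [← intervalIntegral.integral_add_adjacent_intervals (b := -B)
    (hc.intervalIntegrable _ _) (hc.intervalIntegrable _ _)]
  have e1 : ∫ y in (-1 : ℝ)..(-B), max (A + y) 0 * max (B + y) 0 = 0 := by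
    rw [intervalIntegral.integral_congr (g := fun _ => (0 : ℝ))]
    · simp
    · intro y hy
      rw [Set.uIcc_of_le (by linarith)] at hy
      have : max (B + y) 0 = 0 := max_eq_right (by linarith [hy.2])
      simp [this]
  have e2 : ∫ y in (-B)..(1 : ℝ), max (A + y) 0 * max (B + y) 0 =
      ∫ y in (-B)..(1 : ℝ), (A + y) * (B + y) := by
    apply intervalIntegral.integral_congr
    intro y hy
    rw [Set.uIcc_of_le (by linarith)] at hy
    have h1 : max (B + y) 0 = B + y := max_eq_left (by linarith [hy.1])
    have h2 : max (A + y) 0 = A + y := max_eq_left (by linarith [hy.1])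
    simp only [h1, h2]
  have e3 : ∫ y in (-B)..(1 : ℝ), (A + y) * (B + y) =
      (A * B * 1 + (A + B) * 1 ^ 2 / 2 + 1 ^ 3 / 3) -
      (A * B * (-B) + (A + B) * (-B) ^ 2 / 2 + (-B) ^ 3 / 3) := by
    apply intervalIntegral.integral_eq_sub_of_hasDerivAt
      (f := fun y => A * B * y + (A + B) * y ^ 2 / 2 + y ^ 3 / 3)
    · intro y _
      have h := (((hasDerivAt_id y).const_mul (A * B)).add
        ((((hasDerivAt_id y).pow 2).const_mul (A + B)).div_const 2)).add
        (((hasDerivAt_id y).pow 3).div_const 3)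
      convert h using 1
      · rfl
      · simp
        ring
    · exact (by fun_prop : Continuous fun y : ℝ => (A + y) * (B + y)).intervalIntegrable _ _
  rw [e1, e2, e3]
  ring

/-- The outer polynomial integral. -/
lemma outer_aux (u v c0 c1 c2 c3 : ℝ) :
    ∫ x in u..v, (c0 + c1 * x + c2 * x ^ 2 + c3 * x ^ 3) =
      (c0 * v + c1 * v ^ 2 / 2 + c2 * v ^ 3 / 3 + c3 * v ^ 4 / 4) -
      (c0 * u + c1 * u ^ 2 / 2 + c2 * u ^ 3 / 3 + c3 * u ^ 4 / 4) := by
  apply intervalIntegral.integral_eq_sub_of_hasDerivAt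
    (f := fun v => c0 * v + c1 * v ^ 2 / 2 + c2 * v ^ 3 / 3 + c3 * v ^ 4 / 4)
  · intro y _
    have h := ((((hasDerivAt_id y).const_mul c0).add
      ((((hasDerivAt_id y).pow 2).const_mul c1).div_const 2)).add
      ((((hasDerivAt_id y).pow 3).const_mul c2).div_const 3)).add
      ((((hasDerivAt_id y).pow 4).const_mul c3).div_const 4)
    convert h using 1
    · rfl
    · simp
      ring
  · exact (by fun_prop : Continuous fun x : ℝ =>
      c0 + c1 * x + c2 * x ^ 2 + c3 * x ^ 3).intervalIntegrable _ _

/-- Normalised version. -/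
lemma main_aux (a b : ℝ) (hb : 0 ≤ b) (hba : b ≤ a) (ha : a ≤ 1) :
    ∫ x in (-1 : ℝ)..1, ∫ y in (-1 : ℝ)..1, max (a * x + y) 0 * max (b * x + y) 0 =
      2 / 3 * (a * b + 1) + a ^ 2 * (a - 3 * b) / 24 + b ^ 2 * (3 * a - b) / 24 := by
  have hc : Continuous fun x : ℝ =>
      ∫ y in (-1 : ℝ)..1, max (a * x + y) 0 * max (b * x + y) 0 := by
    apply intervalIntegral.continuous_parametric_intervalIntegral_of_continuous'
    fun_prop
  rw [← intervalIntegral.integral_add_adjacent_intervals (b := 0)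
    (hc.intervalIntegrable _ _) (hc.intervalIntegrable _ _)]
  have e1 : ∫ x in (-1 : ℝ)..0, ∫ y in (-1 : ℝ)..1, max (a * x + y) 0 * max (b * x + y) 0 =
      ∫ x in (-1 : ℝ)..0, (1 / 3 + (a + b) / 2 * x + a * b * x ^ 2 +
        (b * a ^ 2 / 2 - a ^ 3 / 6) * x ^ 3) := by
    apply intervalIntegral.integral_congr
    intro x hx
    rw [Set.uIcc_of_le (by norm_num)] at hx
    obtain ⟨h1, h2⟩ := hx
    have h := inner_aux (b * x) (a * x) (by nlinarith) (by nlinarith) (by nlinarith)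
    simp only [mul_comm (max (a * x + _) 0)]
    rw [h]
    ring
  have e2 : ∫ x in (0 : ℝ)..1, ∫ y in (-1 : ℝ)..1, max (a * x + y) 0 * max (b * x + y) 0 =
      ∫ x in (0 : ℝ)..1, (1 / 3 + (a + b) / 2 * x + a * b * x ^ 2 +
        (a * b ^ 2 / 2 - b ^ 3 / 6) * x ^ 3) := by
    apply intervalIntegral.integral_congr
    intro x hx
    rw [Set.uIcc_of_le (by norm_num)] at hx
    obtain ⟨h1, h2⟩ := hx
    have h := inner_aux (a * x) (b * x) (by nlinarith) (by nlinarith) (by nlinarith)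
    simp only []
    rw [h]
    ring
  rw [e1, e2, outer_aux, outer_aux]
  ring

/-- for q,r,s,t ≥ 0 with qt ≥ rs, q + r > 0, s + t > 0, q < r,
∫_{[−1,1]²} max(q x₁ + r x₂, 0) max(s x₁ + t x₂, 0) dx
  = (2/3)(qs + rt) + q²(qt − 3rs)/(24r²) + s²(3qt − rs)/(24t²). -/
theorem stmt18 (q r s t : ℝ) (hq : 0 ≤ q) (hr : 0 ≤ r) (hs : 0 ≤ s) (ht : 0 ≤ t)
    (hdet : r * s ≤ q * t) (hqr : 0 < q + r) (hst : 0 < s + t) (h1 : q < r) :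
    ∫ p in (Set.Icc (-1 : ℝ) 1) ×ˢ (Set.Icc (-1 : ℝ) 1),
        (max (q * p.1 + r * p.2) 0) * (max (s * p.1 + t * p.2) 0) =
      (2 / 3) * (q * s + r * t) + q ^ 2 * (q * t - 3 * (r * s)) / (24 * r ^ 2) +
        s ^ 2 * (3 * (q * t) - r * s) / (24 * t ^ 2) := by
  have hr0 : 0 < r := lt_of_le_of_lt hq h1
  have ht0 : 0 < t := by
    rcases ht.lt_or_eq with h | h
    · exact h
    · subst h
      nlinarith
  have key (c d x y : ℝ) (hd : 0 < d) : max (c * x + d * y) 0 = d * max (c / d * x + y) 0 := by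
    rw [mul_max_of_nonneg _ _ hd.le]
    congr 1
    · field_simp
    · simp
  have hc : Continuous fun p : ℝ × ℝ =>
      (max (q * p.1 + r * p.2) 0) * (max (s * p.1 + t * p.2) 0) := by fun_prop
  have hint := hc.continuousOn.integrableOn_compact (μ := volume)
    ((isCompact_Icc (a := (-1 : ℝ)) (b := 1)).prod (isCompact_Icc (a := (-1 : ℝ)) (b := 1)))
  rw [Measure.volume_eq_prod] at hint ⊢
  rw [setIntegral_prod _ hint]
  simp only [integral_Icc_eq_integral_Ioc]
  simp only [← intervalIntegral.integral_of_le (show (-1 : ℝ) ≤ 1 by norm_num)]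
  simp only [key q r _ _ hr0, key s t _ _ ht0, mul_mul_mul_comm r _ t _,
    intervalIntegral.integral_const_mul]
  rw [main_aux (q / r) (s / t) (by positivity)
    (by rw [div_le_div_iff₀ ht0 hr0]; linarith) (by rw [div_le_one hr0]; exact h1.le)]
  field_simp
end
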